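/- arXiv:2103.04304 — 3 statements merged into one kernel-verified Lean document; each statement's English description precedes it below -/
import Mathlib

section
/- For any setting with two agents having additive valuations v_1, v_2 over a finite set M of indivisible goods and arbitrary entitlements b_1, b_2 > 0 with b_1 + b_2 = 1, there exists an allocation (A_1, A_2) of M such that v_1(A_1) ≥ APS(b_1, v_1, M) and v_2(A_2) ≥ APS(b_2, v_2, M). -/
open Finset

/-- The AnyPrice share (price-based definition): the minimum over all nonnegative
price vectors summing to 1 of the best value of an affordable bundle. -/
noncomputable def APS {ι : Type*} (b : ℝ) (v : Finset ι → ℝ) (M : Finset ι) : ℝ :=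
  sInf {t : ℝ | ∃ p : ι → ℝ, (∀ j ∈ M, 0 ≤ p j) ∧ (∑ j ∈ M, p j) = 1 ∧
    t = sSup {u : ℝ | ∃ S, S ⊆ M ∧ (∑ j ∈ S, p j) ≤ b ∧ u = v S}}

/-!
Price the goods proportionally to the additive valuation of the second agent, and let the first
agent take a best bundle within her budget `b₁`; this is worth at least her AnyPrice share. She
thereby takes at most a `b₁`-fraction of the second agent's total value, so the remaining goods are
worth to the second agent at least a `b₂`-fraction of the total. That is at least his AnyPrice
share, because at these same prices a budget `b₂` buys no more than a `b₂`-fraction.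
-/

section AnyPriceShare

variable {ι : Type*} {M : Finset ι} {b : ℝ} {p : ι → ℝ}

/-- The price vectors over which the AnyPrice share minimizes: nonnegative prices of the goods in
`M`, normalized to total price `1`. Prices outside `M` are unconstrained. -/
structure IsPriceVector (M : Finset ι) (p : ι → ℝ) : Prop where
  nonneg : ∀ j ∈ M, 0 ≤ p j
  sum_eq_one : ∑ j ∈ M, p j = 1

/-- The largest value of a bundle of goods in `M` that costs at most `b` at prices `p`. It has the
junk value `0` when no bundle is affordable, which does not happen if `0 ≤ b`. -/
noncomputable def bestAffordableValue (b : ℝ) (v : Finset ι → ℝ) (M : Finset ι) (p : ι → ℝ) : ℝ :=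
  sSup {u : ℝ | ∃ S, S ⊆ M ∧ ∑ j ∈ S, p j ≤ b ∧ u = v S}

lemma finite_setOf_exists_subset_eq (v : Finset ι → ℝ) (M : Finset ι) :
    {u : ℝ | ∃ S, S ⊆ M ∧ u = v S}.Finite :=
  (M.powerset.finite_toSet.image v).subset fun _ ⟨S, hS, hu⟩ =>
    ⟨S, mem_coe.mpr (mem_powerset.mpr hS), hu.symm⟩

lemma exists_bestAffordableValue_eq (hb : 0 ≤ b) (v : Finset ι → ℝ) (M : Finset ι) (p : ι → ℝ) :
    ∃ S, S ⊆ M ∧ ∑ j ∈ S, p j ≤ b ∧ bestAffordableValue b v M p = v S := by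
  have hne : {u : ℝ | ∃ S, S ⊆ M ∧ ∑ j ∈ S, p j ≤ b ∧ u = v S}.Nonempty :=
    ⟨v ∅, ∅, empty_subset M, by simpa using hb, rfl⟩
  exact hne.csSup_mem <| (finite_setOf_exists_subset_eq v M).subset
    fun _ ⟨S, hS, _, hu⟩ => ⟨S, hS, hu⟩

lemma aps_le_bestAffordableValue (hb : 0 ≤ b) (v : Finset ι → ℝ) (hp : IsPriceVector M p) :
    APS b v M ≤ bestAffordableValue b v M p := by
  refine csInf_le ((finite_setOf_exists_subset_eq v M).bddBelow.mono ?_)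
    ⟨p, hp.nonneg, hp.sum_eq_one, rfl⟩
  rintro _ ⟨q, -, -, rfl⟩
  obtain ⟨S, hS, -, hv⟩ := exists_bestAffordableValue_eq hb v M q
  exact ⟨S, hS, hv⟩

lemma exists_affordable_aps_le (hb : 0 ≤ b) (v : Finset ι → ℝ) (hp : IsPriceVector M p) :
    ∃ S, S ⊆ M ∧ ∑ j ∈ S, p j ≤ b ∧ APS b v M ≤ v S := by
  obtain ⟨S, hS, hSb, hv⟩ := exists_bestAffordableValue_eq hb v M p
  exact ⟨S, hS, hSb, (aps_le_bestAffordableValue hb v hp).trans_eq hv⟩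

-- Without goods there are no price vectors, and `sInf ∅ = 0`.
lemma aps_empty (b : ℝ) (v : Finset ι → ℝ) : APS b v ∅ = 0 := by
  simp [APS]

lemma exists_isPriceVector_sum_mul_eq {w : ι → ℝ} (hM : M.Nonempty) (hw : ∀ j ∈ M, 0 ≤ w j) :
    ∃ p, IsPriceVector M p ∧ ∀ j ∈ M, (∑ i ∈ M, w i) * p j = w j := by
  rcases (sum_nonneg hw).eq_or_lt with hzero | hpos
  · have hcard : (#M : ℝ) ≠ 0 := Nat.cast_ne_zero.mpr hM.card_ne_zero
    have hw_zero : ∀ j ∈ M, w j = 0 := (sum_eq_zero_iff_of_nonneg hw).mp hzero.symm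
    refine ⟨fun _ => (#M : ℝ)⁻¹, ⟨fun _ _ => by positivity, by simp [hcard]⟩, fun j hj => ?_⟩
    rw [← hzero, zero_mul, hw_zero j hj]
  · refine ⟨fun j => w j / ∑ i ∈ M, w i, ⟨fun j hj => div_nonneg (hw j hj) hpos.le, ?_⟩,
      fun j _ => mul_div_cancel₀ _ hpos.ne'⟩
    rw [← sum_div, div_self hpos.ne']

lemma exists_aps_le_and_sum_le_mul_sum {w : ι → ℝ} (hM : M.Nonempty) (hb : 0 ≤ b)
    (v : Finset ι → ℝ) (hw : ∀ j ∈ M, 0 ≤ w j) :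
    ∃ S, S ⊆ M ∧ APS b v M ≤ v S ∧ ∑ j ∈ S, w j ≤ b * ∑ j ∈ M, w j := by
  obtain ⟨p, hp, hpw⟩ := exists_isPriceVector_sum_mul_eq hM hw
  obtain ⟨S, hS, hSb, hv⟩ := exists_affordable_aps_le hb v hp
  refine ⟨S, hS, hv, ?_⟩
  calc ∑ j ∈ S, w j = (∑ j ∈ M, w j) * ∑ j ∈ S, p j := by
        rw [mul_sum]
        exact sum_congr rfl fun j hj => (hpw j (hS hj)).symm
    _ ≤ (∑ j ∈ M, w j) * b := mul_le_mul_of_nonneg_left hSb (sum_nonneg hw)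
    _ = b * ∑ j ∈ M, w j := mul_comm _ _

lemma aps_sum_le_mul_sum {w : ι → ℝ} (hb : 0 ≤ b) (hw : ∀ j ∈ M, 0 ≤ w j) :
    APS b (fun S => ∑ j ∈ S, w j) M ≤ b * ∑ j ∈ M, w j := by
  rcases M.eq_empty_or_nonempty with rfl | hM
  · simp [aps_empty]
  · obtain ⟨S, -, haps, hle⟩ := exists_aps_le_and_sum_le_mul_sum hM hb (fun S => ∑ j ∈ S, w j) hw
    exact haps.trans hle

end AnyPriceShare

theorem two_agents_aps_allocation_general {ι : Type*} [DecidableEq ι] (M : Finset ι)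
    (v₁ : Finset ι → ℝ) (w₂ : ι → ℝ) (hv₁ : 0 ≤ v₁ ∅) (hw₂ : ∀ j ∈ M, 0 ≤ w₂ j)
    (b₁ b₂ : ℝ) (hb₁ : 0 ≤ b₁) (hb₂ : 0 ≤ b₂) (hsum : b₁ + b₂ ≤ 1) :
    ∃ A₁ A₂ : Finset ι, Disjoint A₁ A₂ ∧ A₁ ∪ A₂ = M ∧
      APS b₁ v₁ M ≤ v₁ A₁ ∧ APS b₂ (fun S => ∑ j ∈ S, w₂ j) M ≤ ∑ j ∈ A₂, w₂ j := by
  rcases M.eq_empty_or_nonempty with rfl | hM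
  · exact ⟨∅, ∅, by simpa [aps_empty] using hv₁⟩
  obtain ⟨S, hS, haps, hle⟩ := exists_aps_le_and_sum_le_mul_sum hM hb₁ v₁ hw₂
  refine ⟨S, M \ S, disjoint_sdiff, union_sdiff_of_subset hS, haps, ?_⟩
  have hsplit : ∑ j ∈ M \ S, w₂ j + ∑ j ∈ S, w₂ j = ∑ j ∈ M, w₂ j := sum_sdiff hS
  have hbudget : (b₁ + b₂) * ∑ j ∈ M, w₂ j ≤ ∑ j ∈ M, w₂ j :=
    mul_le_of_le_one_left (sum_nonneg hw₂) hsum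
  calc APS b₂ (fun S => ∑ j ∈ S, w₂ j) M ≤ b₂ * ∑ j ∈ M, w₂ j := aps_sum_le_mul_sum hb₂ hw₂
    _ ≤ ∑ j ∈ M \ S, w₂ j := by linarith

/-- For two agents with additive valuations and arbitrary entitlements, there is an
allocation giving each agent at least her AnyPrice share. -/
theorem two_agents_aps_allocation {ι : Type*} [DecidableEq ι] (M : Finset ι)
    (w₁ w₂ : ι → ℝ) (hw₁ : ∀ j ∈ M, 0 ≤ w₁ j) (hw₂ : ∀ j ∈ M, 0 ≤ w₂ j)
    (b₁ b₂ : ℝ) (hb₁ : 0 < b₁) (hb₂ : 0 < b₂) (hsum : b₁ + b₂ = 1) :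
    ∃ A₁ A₂ : Finset ι, Disjoint A₁ A₂ ∧ A₁ ∪ A₂ = M ∧
      APS b₁ (fun S => ∑ j ∈ S, w₁ j) M ≤ ∑ j ∈ A₁, w₁ j ∧
      APS b₂ (fun S => ∑ j ∈ S, w₂ j) M ≤ ∑ j ∈ A₂, w₂ j :=
  two_agents_aps_allocation_general M (fun S => ∑ j ∈ S, w₁ j) w₂ sum_empty.ge hw₂ b₁ b₂
    hb₁.le hb₂.le hsum.le
end

section
/- For any instance with n agents having additive valuations v_1,…,v_n over a finite set M of indivisible goods and entitlements b_1,…,b_n > 0 summing to 1, there exists an allocation (A_1,…,A_n) of M such that every agent i receives at least half her Truncated Proportional Share: v_i(A_i) ≥ (1/2)·TPS(b_i, v_i, M) for every agent i. -/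
open Finset

def IsPartition {ι : Type*} [DecidableEq ι] (M : Finset ι) {n : ℕ} (A : Fin n → Finset ι) : Prop :=
  (∀ i, A i ⊆ M) ∧ (∀ i j, i ≠ j → Disjoint (A i) (A j)) ∧ ∀ x ∈ M, ∃ i, x ∈ A i

/-- The truncated proportional share of an additive valuation with item values `w`:
the largest `z ≥ 0` with `b * ∑_{j ∈ M} min (w j) z = z`. -/
noncomputable def TPS {ι : Type*} (b : ℝ) (w : ι → ℝ) (M : Finset ι) : ℝ :=
  sSup {z : ℝ | 0 ≤ z ∧ b * ∑ j ∈ M, min (w j) z = z}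

/-!
Truncating a valuation at its TPS turns the TPS into the ordinary proportional share and leaves no
good worth more than it. So it suffices to give everybody half a proportional share when no single
good exceeds that share. Scale all valuations to total one and repeatedly hand over the pair
(agent, good) of largest value, dropping an agent once she has half her entitlement. A good never
takes more from the agents still waiting than it gives to its recipient, and no recipient ever
overshoots her entitlement, so the goods left over always cover the entitlements left over.

An allocation is a map `f : ι → α` from goods to agents; the bundle of `i` is `{j ∈ M | f j = i}`.
-/

section Allocation

variable {ι α : Type*}

theorem isPartition_filter_eq [DecidableEq ι] {n : ℕ} (M : Finset ι) (f : ι → Fin n) :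
    IsPartition M fun i ↦ {j ∈ M | f j = i} :=
  ⟨fun _ ↦ filter_subset _ _,
    fun _ _ hik ↦ disjoint_filter.mpr fun _ _ hi hk ↦ hik (hi.symm.trans hk),
    fun x hx ↦ ⟨f x, mem_filter.mpr ⟨hx, rfl⟩⟩⟩

theorem sum_filter_update_eq {G : Type*} [AddCommMonoid G] [DecidableEq ι] [DecidableEq α]
    {M : Finset ι} {j : ι} (hj : j ∈ M) (f : ι → α) (i k : α) (g : ι → G) :
    ∑ l ∈ M with Function.update f j i l = k, g l =
      (if i = k then g j else 0) + ∑ l ∈ M.erase j with f l = k, g l := by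
  rw [sum_filter, sum_filter, ← add_sum_erase M _ hj, Function.update_self]
  congr 1
  exact sum_congr rfl fun l hl ↦ by rw [Function.update_of_ne (ne_of_mem_erase hl)]

section Greedy

variable {G : Type*} [AddCommGroup G] [LinearOrder G] [IsOrderedAddMonoid G]

/-- The invariant of the greedy procedure, for the valuations `p`, the goods `M` not yet allocated
and the agents `S` not yet satisfied. Agent `i` is entitled to `h i + h i`, wants `h i`, and still
lacks `r i` of it, so `r i + h i` is what is left of her entitlement. -/
structure GreedyInvariant (p : α → ι → G) (h : α → G) (M : Finset ι) (S : Finset α)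
    (r : α → G) : Prop where
  lack_nonneg : ∀ i ∈ S, 0 ≤ r i
  lack_le : ∀ i ∈ S, r i ≤ h i
  value_nonneg : ∀ i ∈ S, ∀ j ∈ M, 0 ≤ p i j
  value_le : ∀ i ∈ S, ∀ j ∈ M, p i j ≤ r i + h i
  sum_entitlement_le : ∀ k ∈ S, ∑ i ∈ S, (r i + h i) ≤ ∑ j ∈ M, p k j

namespace GreedyInvariant

variable {p : α → ι → G} {h r : α → G} {M : Finset ι} {S : Finset α} {i : α} {j : ι}

theorem erase_agent [DecidableEq ι] [DecidableEq α] (H : GreedyInvariant p h M S r)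
    (hi : i ∈ S) (hj : j ∈ M) (hmax : ∀ k ∈ S, p k j ≤ p i j) :
    GreedyInvariant p h (M.erase j) (S.erase i) r where
  lack_nonneg k hk := H.lack_nonneg k (mem_of_mem_erase hk)
  lack_le k hk := H.lack_le k (mem_of_mem_erase hk)
  value_nonneg k hk l hl := H.value_nonneg k (mem_of_mem_erase hk) l (mem_of_mem_erase hl)
  value_le k hk l hl := H.value_le k (mem_of_mem_erase hk) l (mem_of_mem_erase hl)
  sum_entitlement_le k hk := by
    have hkS := mem_of_mem_erase hk
    have hkj : p k j ≤ r i + h i := (hmax k hkS).trans (H.value_le i hi j hj)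
    rw [sum_erase_eq_sub hi, sum_erase_eq_sub hj]
    exact sub_le_sub (H.sum_entitlement_le k hkS) hkj

theorem update_lack [DecidableEq ι] [DecidableEq α] (H : GreedyInvariant p h M S r)
    (hi : i ∈ S) (hj : j ∈ M) (hmax : ∀ k ∈ S, p k j ≤ p i j) (hmax' : ∀ l ∈ M, p i l ≤ p i j)
    (hij : p i j ≤ r i) :
    GreedyInvariant p h (M.erase j) S (Function.update r i (r i - p i j)) where
  lack_nonneg k hk := by
    rcases eq_or_ne k i with rfl | hki
    · rwa [Function.update_self, sub_nonneg]
    · rw [Function.update_of_ne hki]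
      exact H.lack_nonneg k hk
  lack_le k hk := by
    rcases eq_or_ne k i with rfl | hki
    · rw [Function.update_self]
      exact (sub_le_self _ (H.value_nonneg k hk j hj)).trans (H.lack_le k hk)
    · rw [Function.update_of_ne hki]
      exact H.lack_le k hk
  value_nonneg k hk l hl := H.value_nonneg k hk l (mem_of_mem_erase hl)
  value_le k hk l hl := by
    rcases eq_or_ne k i with rfl | hki
    · rw [Function.update_self]
      calc p k l ≤ p k j := hmax' l (mem_of_mem_erase hl)
        _ ≤ h k := hij.trans (H.lack_le k hk)
        _ ≤ r k - p k j + h k := le_add_of_nonneg_left (sub_nonneg.mpr hij)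
    · rw [Function.update_of_ne hki]
      exact H.value_le k hk l (mem_of_mem_erase hl)
  sum_entitlement_le k hk := by
    have hsum : ∑ a ∈ S, (Function.update r i (r i - p i j) a + h a) =
        ∑ a ∈ S, (r a + h a) - p i j := by
      rw [sum_add_distrib, sum_add_distrib, sum_update_of_mem hi, sdiff_singleton_eq_erase,
        sum_erase_eq_sub hi]
      abel
    rw [hsum, sum_erase_eq_sub hj]
    exact sub_le_sub (H.sum_entitlement_le k hk) (hmax k hk)

theorem lack_nonpos_of_empty (H : GreedyInvariant p h ∅ S r) (hi : i ∈ S) : r i ≤ 0 := by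
  have hh : ∀ k ∈ S, 0 ≤ h k := fun k hk ↦ (H.lack_nonneg k hk).trans (H.lack_le k hk)
  calc r i ≤ r i + h i := le_add_of_nonneg_right (hh i hi)
    _ ≤ ∑ k ∈ S, (r k + h k) :=
      single_le_sum (f := fun k ↦ r k + h k)
        (fun k hk ↦ add_nonneg (H.lack_nonneg k hk) (hh k hk)) hi
    _ ≤ 0 := by simpa only [sum_empty] using H.sum_entitlement_le i hi

theorem exists_forall_lack_le_sum [Nonempty α] [DecidableEq α] (H : GreedyInvariant p h M S r) :
    ∃ f : ι → α, ∀ i ∈ S, r i ≤ ∑ j ∈ M with f j = i, p i j := by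
  classical
  induction M using Finset.strongInduction generalizing S r with
  | H M ih =>
  rcases M.eq_empty_or_nonempty with rfl | hM
  · exact ⟨fun _ ↦ Classical.arbitrary α, fun i hi ↦ by simpa using H.lack_nonpos_of_empty hi⟩
  rcases S.eq_empty_or_nonempty with rfl | hS
  · exact ⟨fun _ ↦ Classical.arbitrary α, by simp⟩
  obtain ⟨⟨i, j⟩, hmem, hmax⟩ := exists_max_image (S ×ˢ M) (fun x ↦ p x.1 x.2) (hS.product hM)
  obtain ⟨hi, hj⟩ := mem_product.mp hmem
  have hmax_agent : ∀ k ∈ S, p k j ≤ p i j := fun k hk ↦ hmax (k, j) (mk_mem_product hk hj)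
  have hmax_good : ∀ l ∈ M, p i l ≤ p i j := fun l hl ↦ hmax (i, l) (mk_mem_product hi hl)
  rcases le_total (r i) (p i j) with hsat | hunsat
  · obtain ⟨f, hf⟩ := ih _ (erase_ssubset hj) (H.erase_agent hi hj hmax_agent)
    refine ⟨Function.update f j i, fun k hk ↦ ?_⟩
    rw [sum_filter_update_eq hj]
    rcases eq_or_ne i k with rfl | hik
    · rw [if_pos rfl]
      exact le_add_of_le_of_nonneg hsat <| sum_nonneg fun l hl ↦
        H.value_nonneg i hi l (mem_of_mem_erase (mem_filter.mp hl).1)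
    · rw [if_neg hik, zero_add]
      exact hf k (mem_erase.mpr ⟨hik.symm, hk⟩)
  · obtain ⟨f, hf⟩ :=
      ih _ (erase_ssubset hj) (H.update_lack hi hj hmax_agent hmax_good hunsat)
    refine ⟨Function.update f j i, fun k hk ↦ ?_⟩
    rw [sum_filter_update_eq hj]
    rcases eq_or_ne i k with rfl | hik
    · simpa only [if_pos, Function.update_self, sub_le_iff_le_add'] using hf i hi
    · simpa only [if_neg hik, zero_add, Function.update_of_ne hik.symm] using hf k hk

end GreedyInvariant

end Greedy

section ProportionalShare

variable {K : Type*} [Field K] [LinearOrder K] [IsStrictOrderedRing K]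
  [Fintype α] {M : Finset ι} {v : α → ι → K} {b : α → K}

theorem greedyInvariant_normalized (hv : ∀ i, ∀ j ∈ M, 0 ≤ v i j) (hb : ∀ i, 0 ≤ b i)
    (hbsum : ∑ i, b i ≤ 1) (hcap : ∀ i, ∀ j ∈ M, v i j ≤ b i * ∑ l ∈ M, v i l) :
    GreedyInvariant (fun i j ↦ v i j / ∑ l ∈ M, v i l) (fun i ↦ b i / 2) M
      {i | 0 < ∑ l ∈ M, v i l} (fun i ↦ b i / 2) where
  lack_nonneg i _ := div_nonneg (hb i) zero_le_two
  lack_le _ _ := le_rfl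
  value_nonneg i _ j hj := div_nonneg (hv i j hj) (sum_nonneg (hv i))
  value_le i hi j hj := by
    rw [add_halves]
    exact (div_le_iff₀ (mem_filter.mp hi).2).mpr (hcap i j hj)
  sum_entitlement_le k hk := by
    have hk' : 0 < ∑ l ∈ M, v k l := (mem_filter.mp hk).2
    simp only [add_halves]
    rw [← sum_div, div_self hk'.ne']
    exact (sum_le_univ_sum_of_nonneg hb).trans hbsum

theorem exists_forall_half_mul_sum_le_sum [Nonempty α] [DecidableEq α]
    (hv : ∀ i, ∀ j ∈ M, 0 ≤ v i j) (hb : ∀ i, 0 ≤ b i) (hbsum : ∑ i, b i ≤ 1)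
    (hcap : ∀ i, ∀ j ∈ M, v i j ≤ b i * ∑ l ∈ M, v i l) :
    ∃ f : ι → α, ∀ i, 1 / 2 * (b i * ∑ j ∈ M, v i j) ≤ ∑ j ∈ M with f j = i, v i j := by
  obtain ⟨f, hf⟩ := (greedyInvariant_normalized hv hb hbsum hcap).exists_forall_lack_le_sum
  refine ⟨f, fun i ↦ ?_⟩
  rcases (sum_nonneg (hv i)).eq_or_lt with hzero | hpos
  · rw [← hzero, mul_zero, mul_zero]
    exact sum_nonneg fun j hj ↦ hv i j (mem_filter.mp hj).1
  · have hhalf := hf i (mem_filter.mpr ⟨mem_univ i, hpos⟩)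
    rw [← sum_div, le_div_iff₀ hpos] at hhalf
    linarith

end ProportionalShare

theorem tps_nonneg (b : ℝ) (w : ι → ℝ) (M : Finset ι) : 0 ≤ TPS b w M :=
  Real.sSup_nonneg fun _ hz ↦ hz.1

theorem mul_sum_min_tps {b : ℝ} {w : ι → ℝ} {M : Finset ι} (hb : 0 ≤ b)
    (hw : ∀ j ∈ M, 0 ≤ w j) : b * ∑ j ∈ M, min (w j) (TPS b w M) = TPS b w M := by
  have hclosed : IsClosed {z : ℝ | 0 ≤ z ∧ b * ∑ j ∈ M, min (w j) z = z} :=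
    isClosed_Ici.inter (isClosed_eq (by fun_prop) continuous_id)
  refine (hclosed.csSup_mem ⟨0, le_rfl, ?_⟩ ⟨b * ∑ j ∈ M, w j, ?_⟩).2
  · rw [sum_eq_zero fun j hj ↦ min_eq_right (hw j hj), mul_zero]
  · rintro z ⟨-, hz⟩
    rw [← hz]
    gcongr
    exact min_le_left _ _

theorem half_tps_allocation_general [Fintype α] [Nonempty α] [DecidableEq α] {M : Finset ι}
    {w : α → ι → ℝ} {b : α → ℝ} (hw : ∀ i, ∀ j ∈ M, 0 ≤ w i j) (hb : ∀ i, 0 ≤ b i)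
    (hbsum : ∑ i, b i ≤ 1) :
    ∃ f : ι → α, ∀ i, 1 / 2 * TPS (b i) (w i) M ≤ ∑ j ∈ M with f j = i, w i j := by
  have hfix i : b i * ∑ j ∈ M, min (w i j) (TPS (b i) (w i) M) = TPS (b i) (w i) M :=
    mul_sum_min_tps (hb i) (hw i)
  obtain ⟨f, hf⟩ := exists_forall_half_mul_sum_le_sum
    (v := fun i j ↦ min (w i j) (TPS (b i) (w i) M))
    (fun i j hj ↦ le_min (hw i j hj) (tps_nonneg _ _ _)) hb hbsum
    (fun i j _ ↦ (min_le_right _ _).trans_eq (hfix i).symm)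
  refine ⟨f, fun i ↦ ?_⟩
  calc 1 / 2 * TPS (b i) (w i) M
      = 1 / 2 * (b i * ∑ j ∈ M, min (w i j) (TPS (b i) (w i) M)) := by rw [hfix]
    _ ≤ ∑ j ∈ M with f j = i, min (w i j) (TPS (b i) (w i) M) := hf i
    _ ≤ ∑ j ∈ M with f j = i, w i j := sum_le_sum fun j _ ↦ min_le_left _ _

end Allocation

/-- For `n` agents with additive valuations and arbitrary entitlements summing to 1,
there is an allocation giving every agent at least half her truncated proportional
share. -/
theorem half_tps_allocation {ι : Type*} [DecidableEq ι] (n : ℕ)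
    (M : Finset ι) (w : Fin n → ι → ℝ) (b : Fin n → ℝ)
    (hw : ∀ i, ∀ j ∈ M, 0 ≤ w i j)
    (hb : ∀ i, 0 < b i) (hbsum : ∑ i, b i = 1) :
    ∃ A : Fin n → Finset ι, IsPartition M A ∧
      ∀ i, (1 / 2) * TPS (b i) (w i) M ≤ ∑ j ∈ A i, w i j := by
  have : Nonempty (Fin n) :=
    univ_nonempty_iff.mp (nonempty_of_sum_ne_zero (hbsum.trans_ne one_ne_zero))
  obtain ⟨f, hf⟩ := half_tps_allocation_general hw (fun i ↦ (hb i).le) hbsum.le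
  exact ⟨_, isPartition_filter_eq M f, hf⟩
end

section
/- For every additive valuation v over a finite set M of indivisible goods, every subset K ⊊ M, and every entitlement b with 0 < b < 1/|K|, it holds that APS(b, v, M) ≤ APS(b/(1 − |K|·b), v, M \ K). -/
open Finset

/-!
Let `q` be a price vector on `M \ K`. For `c > b` with `|K| * c < 1`, price every item of `K` at `c`
and scale `q` by `1 - |K| * c` on the other items. A bundle affordable with budget `b` misses
`K`, and its price under `q` is at most `b / (1 - |K| * c)`; hence
`APS b v M ≤ APS (b / (1 - |K| * c)) v (M \ K)`. Now let `c` decrease to `b`: since there are only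
finitely many bundles, a small increase of the budget makes no new bundle affordable, so the share
is upper semicontinuous from the right in the entitlement.
-/

open Filter Topology

section AnyPriceShare

variable {ι : Type*} {M N K : Finset ι} {v : Finset ι → ℝ} {p q : ι → ℝ} {a b c : ℝ}

/-- A price vector on `M`: nonnegative prices normalized to total price `1`. The prices of items
outside `M` are arbitrary. -/
def IsPriceVector_s17 (M : Finset ι) (p : ι → ℝ) : Prop :=
  (∀ j ∈ M, 0 ≤ p j) ∧ ∑ j ∈ M, p j = 1

/-- The best value of a bundle in `M` that is affordable with budget `b` at prices `p`: the inner
maximum in the definition of `APS`. If no bundle is affordable, which requires `b < 0`,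
it is the junk value `sSup ∅ = 0`. -/
noncomputable def bestAffordable (b : ℝ) (v : Finset ι → ℝ) (M : Finset ι) (p : ι → ℝ) : ℝ :=
  sSup {u : ℝ | ∃ S, S ⊆ M ∧ ∑ j ∈ S, p j ≤ b ∧ u = v S}

theorem le_bestAffordable {S : Finset ι} (hSM : S ⊆ M) (hSb : ∑ j ∈ S, p j ≤ b) :
    v S ≤ bestAffordable b v M p := by
  have hfin : {u : ℝ | ∃ S, S ⊆ M ∧ ∑ j ∈ S, p j ≤ b ∧ u = v S}.Finite := by
    refine (M.powerset.finite_toSet.image v).subset ?_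
    rintro u ⟨S, hS, -, rfl⟩
    exact ⟨S, mem_coe.2 (mem_powerset.2 hS), rfl⟩
  exact le_csSup hfin.bddAbove ⟨S, hSM, hSb, rfl⟩

theorem bestAffordable_le (hb : 0 ≤ b) (h : ∀ S ⊆ M, ∑ j ∈ S, p j ≤ b → v S ≤ a) :
    bestAffordable b v M p ≤ a := by
  refine csSup_le ⟨v ∅, ∅, M.empty_subset, by simpa using hb, rfl⟩ ?_
  rintro u ⟨S, hSM, hSb, rfl⟩
  exact h S hSM hSb

theorem bestAffordable_le_bestAffordable (hb : 0 ≤ b)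
    (h : ∀ S ⊆ M, ∑ j ∈ S, p j ≤ b → S ⊆ N ∧ ∑ j ∈ S, q j ≤ c) :
    bestAffordable b v M p ≤ bestAffordable c v N q :=
  bestAffordable_le hb fun S hSM hSb =>
    have ⟨hSN, hSc⟩ := h S hSM hSb
    le_bestAffordable hSN hSc

theorem exists_isPriceVector (hM : M.Nonempty) : ∃ p, IsPriceVector_s17 M p := by
  classical
  obtain ⟨i, hi⟩ := hM
  have hnonneg : (0 : ι → ℝ) ≤ Pi.single i 1 := Pi.single_nonneg.2 zero_le_one
  exact ⟨Pi.single i 1, fun j _ => hnonneg j, by simp [hi]⟩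

theorem aps_le_bestAffordable (hb : 0 ≤ b) (hp : IsPriceVector_s17 M p) :
    APS b v M ≤ bestAffordable b v M p := by
  refine csInf_le ⟨v ∅, ?_⟩ ⟨p, hp.1, hp.2, rfl⟩
  rintro t ⟨p', -, -, rfl⟩
  exact le_bestAffordable M.empty_subset (by simpa using hb)

theorem le_aps (hM : M.Nonempty) (h : ∀ p, IsPriceVector_s17 M p → a ≤ bestAffordable b v M p) :
    a ≤ APS b v M := by
  obtain ⟨p, hp⟩ := exists_isPriceVector hM
  refine le_csInf ⟨_, p, hp.1, hp.2, rfl⟩ ?_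
  rintro t ⟨p', hp'_nonneg, hp'_sum, rfl⟩
  exact h p' ⟨hp'_nonneg, hp'_sum⟩

theorem eventually_affordable_imp_affordable (M : Finset ι) (p : ι → ℝ) (b : ℝ) :
    ∀ᶠ c in 𝓝 b, ∀ S ∈ M.powerset, ∑ j ∈ S, p j ≤ c → ∑ j ∈ S, p j ≤ b := by
  refine (eventually_all_finset _).2 fun S _ => ?_
  rcases le_or_gt (∑ j ∈ S, p j) b with hSb | hSb
  · exact .of_forall fun _ _ => hSb
  · filter_upwards [eventually_lt_nhds hSb] with c hc hSc
    exact absurd hSc hc.not_ge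

theorem upperSemicontinuousWithinAt_aps (hM : M.Nonempty) (hb : 0 ≤ b) :
    UpperSemicontinuousWithinAt (fun c => APS c v M) (Set.Ici b) b := by
  intro a ha
  obtain ⟨p, hp, hpa⟩ : ∃ p, IsPriceVector_s17 M p ∧ bestAffordable b v M p < a := by
    by_contra! h
    exact ha.not_ge (le_aps hM h)
  filter_upwards [self_mem_nhdsWithin,
    nhdsWithin_le_nhds (eventually_affordable_imp_affordable M p b)] with c hbc hc
  have hc_nonneg : 0 ≤ c := hb.trans hbc
  calc APS c v M ≤ bestAffordable c v M p := aps_le_bestAffordable hc_nonneg hp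
    _ ≤ bestAffordable b v M p := bestAffordable_le_bestAffordable hc_nonneg fun S hSM hSc =>
        ⟨hSM, hc S (mem_powerset.2 hSM) hSc⟩
    _ < a := hpa

theorem disjoint_of_sum_lt {S : Finset ι} (hp : ∀ j ∈ S, 0 ≤ p j) (hK : ∀ j ∈ K, c ≤ p j)
    (hS : ∑ j ∈ S, p j < c) : Disjoint S K :=
  disjoint_left.2 fun j hjS hjK =>
    ((hK j hjK).trans (single_le_sum hp hjS)).not_gt hS

variable [DecidableEq ι]

/-- The price vector on `M` obtained from a price vector `q` on `M \ K` by pricing each item of `K`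
at `c` and scaling the prices of the other items by what remains of the total price `1`. -/
def extendPrice (K : Finset ι) (c : ℝ) (q : ι → ℝ) : ι → ℝ :=
  K.piecewise (fun _ => c) fun j => (1 - #K * c) * q j

theorem extendPrice_of_mem {j : ι} (hj : j ∈ K) : extendPrice K c q j = c :=
  piecewise_eq_of_mem _ _ _ hj

theorem extendPrice_of_notMem {j : ι} (hj : j ∉ K) :
    extendPrice K c q j = (1 - #K * c) * q j :=
  piecewise_eq_of_notMem _ _ _ hj

theorem sum_extendPrice_of_disjoint {S : Finset ι} (hSK : Disjoint S K) :
    ∑ j ∈ S, extendPrice K c q j = (1 - #K * c) * ∑ j ∈ S, q j := by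
  rw [mul_sum]
  exact sum_congr rfl fun j hj => extendPrice_of_notMem (disjoint_left.1 hSK hj)

theorem isPriceVector_extendPrice (hKM : K ⊆ M) (hc : 0 ≤ c) (hKc : #K * c ≤ 1)
    (hq : IsPriceVector_s17 (M \ K) q) : IsPriceVector_s17 M (extendPrice K c q) := by
  constructor
  · intro j hjM
    by_cases hjK : j ∈ K
    · rwa [extendPrice_of_mem hjK]
    · rw [extendPrice_of_notMem hjK]
      exact mul_nonneg (sub_nonneg.2 hKc) (hq.1 j (mem_sdiff.2 ⟨hjM, hjK⟩))
  · have hK_sum : ∑ j ∈ K, extendPrice K c q j = #K * c := by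
      rw [sum_congr rfl fun j => extendPrice_of_mem, sum_const, nsmul_eq_mul]
    rw [← sum_sdiff hKM, sum_extendPrice_of_disjoint sdiff_disjoint, hq.2, hK_sum]
    ring

theorem aps_le_aps_sdiff_of_lt (hK : K ⊂ M) (hb : 0 ≤ b) (hbc : b < c) (hKc : #K * c < 1) :
    APS b v M ≤ APS (b / (1 - #K * c)) v (M \ K) := by
  refine le_aps (sdiff_nonempty.2 hK.not_subset) fun q hq => ?_
  have hp : IsPriceVector_s17 M (extendPrice K c q) :=
    isPriceVector_extendPrice hK.subset (hb.trans hbc.le) hKc.le hq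
  refine (aps_le_bestAffordable hb hp).trans
    (bestAffordable_le_bestAffordable hb fun S hSM hSb => ?_)
  have hSK : Disjoint S K :=
    disjoint_of_sum_lt (fun j hj => hp.1 j (hSM hj)) (fun j hj => (extendPrice_of_mem hj).ge)
      (hSb.trans_lt hbc)
  rw [sum_extendPrice_of_disjoint hSK] at hSb
  exact ⟨subset_sdiff.2 ⟨hSM, hSK⟩, (le_div_iff₀' (sub_pos.2 hKc)).2 hSb⟩

theorem tendsto_div_one_sub_mul_nhdsGE {k : ℝ} (hk : 0 ≤ k) (hb : 0 ≤ b) (hkb : k * b < 1) :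
    Tendsto (fun c => b / (1 - k * c)) (𝓝[>] b) (𝓝[≥] (b / (1 - k * b))) := by
  have hcont : ContinuousAt (fun c => 1 - k * c) b := by fun_prop
  refine tendsto_nhdsWithin_iff.2 ⟨?_, ?_⟩
  · exact (continuousAt_const.div hcont (sub_pos.2 hkb).ne').tendsto.mono_left nhdsWithin_le_nhds
  · filter_upwards [self_mem_nhdsWithin,
      nhdsWithin_le_nhds (hcont.eventually_const_lt (sub_pos.2 hkb))] with c hbc hc
    have hbc : b ≤ c := le_of_lt hbc
    exact Set.mem_Ici.2 (by gcongr)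

end AnyPriceShare

theorem aps_remove_items_general {ι : Type*} [DecidableEq ι] {M K : Finset ι} (hK : K ⊂ M)
    (v : Finset ι → ℝ) {b : ℝ} (hb : 0 ≤ b) (hKb : #K * b < 1) :
    APS b v M ≤ APS (b / (1 - #K * b)) v (M \ K) := by
  by_contra! hlt
  have hnonneg : 0 ≤ b / (1 - #K * b) := div_nonneg hb (sub_pos.2 hKb).le
  have husc := upperSemicontinuousWithinAt_aps (v := v) (sdiff_nonempty.2 hK.not_subset) hnonneg
  have hdrop : ∀ᶠ c in 𝓝[>] b, APS (b / (1 - #K * c)) v (M \ K) < APS b v M :=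
    (tendsto_div_one_sub_mul_nhdsGE (Nat.cast_nonneg _) hb hKb).eventually (husc _ hlt)
  have hprice : ∀ᶠ c : ℝ in 𝓝[>] b, #K * c < 1 :=
    nhdsWithin_le_nhds ((continuous_const_mul (#K : ℝ)).continuousAt.eventually_lt_const hKb)
  obtain ⟨c, hdropc, hKc, hbc⟩ := (hdrop.and (hprice.and self_mem_nhdsWithin)).exists
  exact (aps_le_aps_sdiff_of_lt hK hb hbc hKc).not_gt hdropc

/-- Removing a proper subset `K` of items and rescaling the entitlement `b < 1/|K|`
to `b/(1-|K|·b)` can only increase the AnyPrice share. -/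
theorem aps_remove_items {ι : Type*} [DecidableEq ι] (M K : Finset ι) (hK : K ⊂ M)
    (w : ι → ℝ) (hw : ∀ j ∈ M, 0 ≤ w j)
    (b : ℝ) (hb0 : 0 < b) (hb1 : (K.card : ℝ) * b < 1) :
    APS b (fun S => ∑ j ∈ S, w j) M
      ≤ APS (b / (1 - (K.card : ℝ) * b)) (fun S => ∑ j ∈ S, w j) (M \ K) :=
  aps_remove_items_general hK _ hb0.le hb1
end
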